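/- Let n ≥ 1 be an integer and let 0 < p < ∞. Then 2ⁿ·(1+np)^{1/p}·n! ≤ C(n,p) ≤ (2e)ⁿ·n!. Equivalently, (2e)^{−n} ≤ D**(n,p,[0,1]) ≤ 2^{−n}·(1+np)^{−1/p}. -/

import Mathlib

open Set Polynomial Nat MeasureTheory ENNReal

/-- `fd 0` belongs to `𝒟ⁿ([a,b])`, with `fd k` its `k`-th derivative: `fd k` exists and is
continuous on `[a,b]` for `0 ≤ k ≤ n-1`, and `fd n` is the derivative of `fd (n-1)` on `(a,b)`. -/
def IsDn (n : ℕ) (a b : ℝ) (fd : ℕ → ℝ → ℝ) : Prop :=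
  (∀ k, k + 1 < n → ∀ x ∈ Set.Icc a b, HasDerivWithinAt (fd k) (fd (k + 1) x) (Set.Icc a b) x) ∧
  ContinuousOn (fd (n - 1)) (Set.Icc a b) ∧
  (∀ x ∈ Set.Ioo a b, HasDerivAt (fd (n - 1)) (fd n x) x)

/-- `m_n(f) = inf_{a<t<b} |f^{(n)}(t)|`. -/
noncomputable def mIoo (n : ℕ) (a b : ℝ) (fd : ℕ → ℝ → ℝ) : ℝ :=
  sInf ((fun t => |fd n t|) '' Set.Ioo a b)

/-- `‖f‖_{p,[a,b]}` for `0 < p < ∞`. -/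
noncomputable def Lp (p a b : ℝ) (f : ℝ → ℝ) : ℝ :=
  (∫ t in a..b, |f t| ^ p) ^ (1 / p)

/-- `‖f‖_{∞,[a,b]}`. -/
noncomputable def Lsup (a b : ℝ) (f : ℝ → ℝ) : ℝ :=
  sSup ((fun t => |f t|) '' Set.Icc a b)

/-- `‖f‖_{p,[a,b]}` for `0 < p ≤ ∞`. -/
noncomputable def pnorm (p : ℝ≥0∞) (a b : ℝ) (f : ℝ → ℝ) : ℝ :=
  if p = ⊤ then Lsup a b f else Lp p.toReal a b f

/-- `D**(n,p,[a,b])`, `p` finite. -/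
noncomputable def Dstar (n : ℕ) (p a b : ℝ) : ℝ :=
  sInf { c | ∃ Q : Polynomial ℝ, Q.Monic ∧ Q.natDegree = n ∧ c = Lp p a b (fun x => Q.eval x) }

/-- `D**(n,∞,[a,b])`. -/
noncomputable def DstarInf (n : ℕ) (a b : ℝ) : ℝ :=
  sInf { c | ∃ Q : Polynomial ℝ, Q.Monic ∧ Q.natDegree = n ∧ c = Lsup a b (fun x => Q.eval x) }

/-- `C(n,p)`, `p` finite. -/
noncomputable def Cnp (n : ℕ) (p : ℝ) : ℝ :=
  sSup { c | ∃ fd : ℕ → ℝ → ℝ, IsDn n 0 1 fd ∧ (∃ x ∈ Set.Icc (0:ℝ) 1, fd 0 x ≠ 0) ∧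
    c = mIoo n 0 1 fd / Lp p 0 1 (fd 0) }

/-- `C(n,∞)`. -/
noncomputable def CnpInf (n : ℕ) : ℝ :=
  sSup { c | ∃ fd : ℕ → ℝ → ℝ, IsDn n 0 1 fd ∧ (∃ x ∈ Set.Icc (0:ℝ) 1, fd 0 x ≠ 0) ∧
    c = mIoo n 0 1 fd / Lsup 0 1 (fd 0) }

/-!
Suppose `|f⁽ⁿ⁾| ≥ m` on `(a, b)`. By Darboux's theorem `f⁽ⁿ⁾` has constant sign, so up to sign
`f⁽ⁿ⁻¹⁾` grows at rate at least `m`. Let `z` be a point where `f` takes its value closest to `0`;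
then `|f x| ≥ |f x - f z|`, and the difference quotient of `f` at `z`, being an average of `Df` over
the segment from `z` to `x`, is a function of the same kind with `n - 1` and `m / n` in place of `n`
and `m`. Iterating, `|f x| ≥ (m / n!) ∏ |x - zᵢ|` for some `zᵢ`. Jensen's inequality bounds the `Lᵖ`
norm of the product below through the averages of `log |x - zᵢ|`, and each of these is at least
`log ((b - a) / 2) - 1` because binary entropy is at most `log 2`. The opposite bounds come from the
monic polynomial `(x - 1/2)ⁿ`.
-/

theorem hasDerivAt_intervalIntegral_of_continuous {F F' : ℝ → ℝ → ℝ} (hF : ∀ x, Continuous (F x))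
    (hF' : Continuous (Function.uncurry F')) (hd : ∀ x t, HasDerivAt (F · t) (F' x t) x)
    (a b x₀ : ℝ) :
    HasDerivAt (fun x => ∫ t in a..b, F x t) (∫ t in a..b, F' x₀ t) x₀ := by
  obtain ⟨M, hM⟩ := ((isCompact_closedBall x₀ 1).prod (isCompact_uIcc (a := a) (b := b))
    ).exists_bound_of_continuousOn hF'.continuousOn
  refine (intervalIntegral.hasDerivAt_integral_of_dominated_loc_of_deriv_le
    (bound := fun _ => M) (Metric.closedBall_mem_nhds x₀ one_pos)
    (.of_forall fun x => (hF x).aestronglyMeasurable) ((hF x₀).intervalIntegrable a b)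
    (by fun_prop) (.of_forall fun t ht x hx => ?_) (by simp) (.of_forall fun t _ x _ => hd x t)).2
  exact hM (x, t) ⟨hx, uIoc_subset_uIcc ht⟩

theorem exists_forall_abs_sub_le_abs {X : Type*} [TopologicalSpace X] {s : Set X} {f : X → ℝ}
    (hs : IsCompact s) (hs' : IsConnected s) (hf : ContinuousOn f s) :
    ∃ z ∈ s, ∀ x ∈ s, |f x - f z| ≤ |f x| := by
  obtain ⟨α, β, himage⟩ : ∃ α β, f '' s = Icc α β :=
    ⟨_, _, eq_Icc_of_connected_compact (hs'.image f hf) (hs.image_of_continuousOn hf)⟩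
  have hαβ : α ≤ β := nonempty_Icc.1 (himage ▸ hs'.nonempty.image f)
  obtain ⟨z, hz, hfz⟩ : (projIcc α β hαβ 0 : ℝ) ∈ f '' s :=
    himage.symm ▸ (projIcc α β hαβ 0).2
  refine ⟨z, hz, fun x hx => ?_⟩
  obtain ⟨hαx, hxβ⟩ : f x ∈ Icc α β := himage ▸ mem_image_of_mem f hx
  rw [hfz]
  simp only [coe_projIcc]
  grind

/-! ### Growth and difference quotients -/

/-- `h` grows on `s` at rate at least `c`. This is the form in which a lower bound `c` on the
derivative of `h` is used, since it survives where `h` is merely continuous. -/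
def GrowsAtLeast (c : ℝ) (h : ℝ → ℝ) (s : Set ℝ) : Prop :=
  ∀ᵉ (x ∈ s) (y ∈ s), x ≤ y → c * (y - x) ≤ h y - h x

theorem GrowsAtLeast.mul_abs_sub_le {c : ℝ} {h : ℝ → ℝ} {s : Set ℝ} (hh : GrowsAtLeast c h s)
    {x y : ℝ} (hx : x ∈ s) (hy : y ∈ s) : c * |x - y| ≤ |h x - h y| := by
  wlog hxy : y ≤ x generalizing x y
  · rw [abs_sub_comm x, abs_sub_comm (h x)]
    exact this hy hx (le_of_not_ge hxy)
  rw [abs_of_nonneg (sub_nonneg.2 hxy)]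
  exact (hh y hy x hx hxy).trans (le_abs_self _)

theorem GrowsAtLeast.congr {c : ℝ} {h k : ℝ → ℝ} {s : Set ℝ} (hh : GrowsAtLeast c h s)
    (hhk : EqOn h k s) : GrowsAtLeast c k s := fun x hx y hy hxy => by
  rw [← hhk hx, ← hhk hy]
  exact hh x hx y hy hxy

/-- The `j`-th moment of `G` along the segment from `z` to `x`, in the parameter `t ∈ [0, 1]`. For
`j = 0` and `G = deriv F` it is the difference quotient `(F x - F z) / (x - z)`, extended to
`x = z`; differentiating in `x` raises `j` by one. -/
noncomputable def segmentMoment (z : ℝ) (j : ℕ) (G : ℝ → ℝ) (x : ℝ) : ℝ :=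
  ∫ t in (0 : ℝ)..1, t ^ j * G (z + t * (x - z))

section SegmentMoment

variable {G : ℝ → ℝ} (z : ℝ) (j : ℕ)

theorem continuous_segmentMoment (hG : Continuous G) : Continuous (segmentMoment z j G) :=
  intervalIntegral.continuous_parametric_intervalIntegral_of_continuous' (by fun_prop) 0 1

theorem hasDerivAt_segmentMoment (hG : ContDiff ℝ 1 G) (x : ℝ) :
    HasDerivAt (segmentMoment z j G) (segmentMoment z (j + 1) (deriv G) x) x := by
  have hG₀ : Continuous G := hG.continuous
  have : Continuous (deriv G) := hG.continuous_deriv_one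
  refine hasDerivAt_intervalIntegral_of_continuous
    (F := fun x t => t ^ j * G (z + t * (x - z)))
    (F' := fun x t => t ^ (j + 1) * deriv G (z + t * (x - z)))
    (fun x => by fun_prop) (by fun_prop) (fun x t => ?_) 0 1 x
  have hdilation : HasDerivAt (fun x => z + t * (x - z)) t x := by
    simpa using (((hasDerivAt_id x).sub_const z).const_mul t).const_add z
  have hGt := (hG.differentiable_one _).hasDerivAt.comp x hdilation
  exact (hGt.const_mul (t ^ j)).congr_deriv (by ring)

theorem deriv_segmentMoment (hG : ContDiff ℝ 1 G) :
    deriv (segmentMoment z j G) = segmentMoment z (j + 1) (deriv G) :=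
  funext fun x => (hasDerivAt_segmentMoment z j hG x).deriv

theorem contDiff_segmentMoment {N : ℕ} (hG : ContDiff ℝ N G) :
    ContDiff ℝ N (segmentMoment z j G) := by
  induction N generalizing j G with
  | zero => exact contDiff_zero.2 (continuous_segmentMoment z j hG.continuous)
  | succ N ih =>
    have hG₁ : ContDiff ℝ 1 G := hG.of_le (by simp)
    rw [Nat.cast_add_one] at hG ⊢
    refine contDiff_succ_iff_deriv.2
      ⟨fun x => (hasDerivAt_segmentMoment z j hG₁ x).differentiableAt, by simp, ?_⟩
    rw [deriv_segmentMoment z j hG₁]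
    exact ih (j + 1) (contDiff_succ_iff_deriv.1 hG).2.2

theorem iteratedDeriv_segmentMoment {N : ℕ} (hG : ContDiff ℝ N G) :
    iteratedDeriv N (segmentMoment z j G) = segmentMoment z (j + N) (iteratedDeriv N G) := by
  induction N generalizing j G with
  | zero => simp only [iteratedDeriv_zero, add_zero]
  | succ N ih =>
    have hG₁ : ContDiff ℝ 1 G := hG.of_le (by simp)
    rw [Nat.cast_add_one] at hG
    rw [iteratedDeriv_succ', deriv_segmentMoment z j hG₁,
      ih (j + 1) (contDiff_succ_iff_deriv.1 hG).2.2, iteratedDeriv_succ', add_right_comm, add_assoc]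

theorem sub_eq_mul_segmentMoment {F : ℝ → ℝ} (hF : ContDiff ℝ 1 F) (x : ℝ) :
    F x - F z = (x - z) * segmentMoment z 0 (deriv F) x := by
  have : Continuous (deriv F) := hF.continuous_deriv_one
  have hint := intervalIntegral.integral_unitInterval_deriv_eq_sub (z₀ := z) (z₁ := x - z)
    (f := F) (f' := deriv F) (by fun_prop) fun t _ => (hF.differentiable_one _).hasDerivAt
  simpa only [segmentMoment, pow_zero, one_mul, smul_eq_mul, add_sub_cancel] using! hint.symm

theorem growsAtLeast_segmentMoment {c : ℝ} {s : Set ℝ} (hc : GrowsAtLeast c G s)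
    (hG : Continuous G) (hs : Convex ℝ s) {z : ℝ} (hz : z ∈ s) :
    GrowsAtLeast (c / (j + 2)) (segmentMoment z j G) s := by
  intro x hx y hy hxy
  have hmem : ∀ t ∈ Icc (0 : ℝ) 1, ∀ w ∈ s, z + t * (w - z) ∈ s := fun t ht w hw =>
    hs.add_smul_sub_mem hz hw ht
  calc c / (j + 2) * (y - x)
      = ∫ t in (0 : ℝ)..1, t ^ (j + 1) * (c * (y - x)) := by
        rw [intervalIntegral.integral_mul_const, integral_pow]
        push_cast
        ring
    _ ≤ ∫ t in (0 : ℝ)..1, (t ^ j * G (z + t * (y - z)) - t ^ j * G (z + t * (x - z))) := by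
        refine intervalIntegral.integral_mono_on zero_le_one
          (Continuous.intervalIntegrable (by fun_prop) _ _)
          (Continuous.intervalIntegrable (by fun_prop) _ _) fun t ht => ?_
        have hgrow := hc _ (hmem t ht x hx) _ (hmem t ht y hy)
          (by gcongr; exact ht.1)
        calc t ^ (j + 1) * (c * (y - x))
            = t ^ j * (c * (z + t * (y - z) - (z + t * (x - z)))) := by ring
          _ ≤ t ^ j * (G (z + t * (y - z)) - G (z + t * (x - z))) :=
            mul_le_mul_of_nonneg_left hgrow (pow_nonneg ht.1 j)
          _ = _ := by ring
    _ = _ := intervalIntegral.integral_sub (Continuous.intervalIntegrable (by fun_prop) _ _)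
        (Continuous.intervalIntegrable (by fun_prop) _ _)

end SegmentMoment

theorem exists_mul_prod_abs_sub_le_abs {N : ℕ} {c : ℝ} {s : Set ℝ} {F : ℝ → ℝ}
    (hs : IsCompact s) (hs' : Convex ℝ s) (hne : s.Nonempty) (hF : ContDiff ℝ N F)
    (hgrow : GrowsAtLeast ((N + 1)! * c) (iteratedDeriv N F) s) :
    ∃ z : Fin (N + 1) → ℝ, ∀ x ∈ s, c * ∏ i, |x - z i| ≤ |F x| := by
  induction N generalizing F with
  | zero =>
    obtain ⟨z₀, hz₀, hmin⟩ := exists_forall_abs_sub_le_abs hs (hs'.isConnected hne)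
      hF.continuous.continuousOn
    simp only [zero_add, factorial_one, cast_one, one_mul, iteratedDeriv_zero] at hgrow
    refine ⟨fun _ => z₀, fun x hx => ?_⟩
    simpa using (hgrow.mul_abs_sub_le hx hz₀).trans (hmin x hx)
  | succ N ih =>
    obtain ⟨z₀, hz₀, hmin⟩ := exists_forall_abs_sub_le_abs hs (hs'.isConnected hne)
      hF.continuous.continuousOn
    have hF₁ : ContDiff ℝ 1 F := hF.of_le (by simp)
    have hF' : ContDiff ℝ N (deriv F) := by
      rw [Nat.cast_add_one] at hF
      exact (contDiff_succ_iff_deriv.1 hF).2.2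
    have hquot : ContDiff ℝ N (segmentMoment z₀ 0 (deriv F)) := contDiff_segmentMoment z₀ 0 hF'
    have hquot_grow : GrowsAtLeast ((N + 1)! * c)
        (iteratedDeriv N (segmentMoment z₀ 0 (deriv F))) s := by
      rw [iteratedDeriv_segmentMoment z₀ 0 hF', ← iteratedDeriv_succ']
      convert growsAtLeast_segmentMoment (0 + N) hgrow (hF.continuous_iteratedDeriv' (N + 1))
        hs' hz₀ using 1
      rw [factorial_succ (N + 1)]
      push_cast
      field_simp
      ring
    obtain ⟨z, hz⟩ := ih hquot hquot_grow
    refine ⟨Fin.cons z₀ z, fun x hx => ?_⟩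
    calc c * ∏ i, |x - (Fin.cons z₀ z : Fin (N + 2) → ℝ) i|
        = |x - z₀| * (c * ∏ i, |x - z i|) := by
          rw [Fin.prod_univ_succ]
          simp only [Fin.cons_zero, Fin.cons_succ]
          ring
      _ ≤ |x - z₀| * |segmentMoment z₀ 0 (deriv F) x| := by gcongr; exact hz x hx
      _ = |F x - F z₀| := by rw [sub_eq_mul_segmentMoment z₀ hF₁, abs_mul]
      _ ≤ |F x| := hmin x hx

/-! ### `Lᵖ` norms of products of linear factors -/

theorem intervalIntegrable_log_sub (a b z : ℝ) :
    IntervalIntegrable (fun x => Real.log (x - z)) volume a b := by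
  simpa only [sub_add_cancel] using
    (intervalIntegral.intervalIntegrable_log' (a := a - z) (b := b - z)).comp_sub_right z

theorem log_sub_one_le_average_log_sub {a b : ℝ} (hab : a < b) (z : ℝ) :
    Real.log ((b - a) / 2) - 1 ≤ ⨍ x in a..b, Real.log (x - z) := by
  set L := b - a with hL
  have hL₀ : 0 < L := sub_pos.2 hab
  -- The integral is minus a binary entropy, up to terms independent of `z`.
  set u := (z - a) / L with hu
  have hza : z - a = L * u := by rw [hu]; field_simp
  have hbz : b - z = L * (1 - u) := by rw [mul_sub, ← hza]; ring
  have hentropy := Real.binEntropy_le_log_two (p := u)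
  rw [Real.binEntropy_eq_negMulLog_add_negMulLog_one_sub] at hentropy
  have hint : ∫ x in a..b, Real.log (x - z) =
      L * (Real.log L - (Real.negMulLog u + Real.negMulLog (1 - u)) - 1) := calc
    _ = -Real.negMulLog (b - z) - Real.negMulLog (z - a) - L := by
      rw [intervalIntegral.integral_comp_sub_right Real.log, integral_log, Real.negMulLog,
        Real.negMulLog, ← neg_sub z a, Real.log_neg_eq_log]
      ring
    _ = _ := by
      rw [hza, hbz, Real.negMulLog_mul, Real.negMulLog_mul, Real.negMulLog]
      ring
  rw [interval_average_eq_div, ← hL, hint, mul_div_cancel_left₀ _ hL₀.ne',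
    Real.log_div hL₀.ne' two_ne_zero]
  linarith

theorem exp_intervalAverage_le {a b : ℝ} (hab : a ≠ b) {u : ℝ → ℝ}
    (hu : IntervalIntegrable u volume a b)
    (hexp : IntervalIntegrable (fun x => Real.exp (u x)) volume a b) :
    Real.exp (⨍ x in a..b, u x) ≤ ⨍ x in a..b, Real.exp (u x) :=
  convexOn_exp.map_set_average_le Real.continuous_exp.continuousOn isClosed_univ
    (by simpa [Set.uIoc] using fun h => lt_of_le_of_ne h hab.symm) (by simp [Set.uIoc]) (by simp)
    hu.def' hexp.def'

theorem exp_mul_sum_log_sub_ae_eq {ι : Type*} [Fintype ι] (p : ℝ) (z : ι → ℝ) :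
    (fun x => Real.exp (p * ∑ i, Real.log (x - z i))) =ᵐ[volume]
      fun x => (∏ i, |x - z i|) ^ p := by
  filter_upwards [(finite_range z).countable.ae_notMem volume] with x hx
  have hpos : ∀ i, 0 < |x - z i| := fun i => abs_pos.2 (sub_ne_zero.2 fun h => hx ⟨i, h.symm⟩)
  rw [Real.rpow_def_of_pos (Finset.prod_pos fun i _ => hpos i),
    Real.log_prod fun i _ => (hpos i).ne', mul_comm]
  simp only [Real.log_abs]

theorem le_average_prod_abs_sub_rpow {a b p : ℝ} (hab : a < b) (hp : 0 ≤ p) {ι : Type*}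
    [Fintype ι] (z : ι → ℝ) :
    (((b - a) / (2 * Real.exp 1)) ^ Fintype.card ι) ^ p ≤ ⨍ x in a..b, (∏ i, |x - z i|) ^ p := by
  have : 0 < b - a := sub_pos.2 hab
  have hlog : ∀ i, IntervalIntegrable (fun x => Real.log (x - z i)) volume a b := fun i =>
    intervalIntegrable_log_sub a b (z i)
  have hu : IntervalIntegrable (fun x => p * ∑ i, Real.log (x - z i)) volume a b := by
    simpa only [Finset.sum_fn] using!
      (IntervalIntegrable.sum Finset.univ fun i _ => hlog i).const_mul p
  have hexp := exp_mul_sum_log_sub_ae_eq p z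
  have hprod : IntervalIntegrable (fun x => (∏ i, |x - z i|) ^ p) volume a b :=
    (Continuous.rpow_const (by fun_prop) fun _ => .inr hp).intervalIntegrable a b
  have hsum : Fintype.card ι * (Real.log ((b - a) / 2) - 1) ≤
      ∑ i, ⨍ x in a..b, Real.log (x - z i) := by
    simpa only [Finset.sum_const, Finset.card_univ, nsmul_eq_mul] using
      Finset.sum_le_sum fun i (_ : i ∈ Finset.univ) => log_sub_one_le_average_log_sub hab (z i)
  calc (((b - a) / (2 * Real.exp 1)) ^ Fintype.card ι) ^ p
      = Real.exp (p * (Fintype.card ι * (Real.log ((b - a) / 2) - 1))) := by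
        rw [← div_div, Real.rpow_def_of_pos (by positivity), Real.log_pow,
          Real.log_div (by positivity) (by positivity), Real.log_exp, mul_comm]
    _ ≤ Real.exp (p * ∑ i, ⨍ x in a..b, Real.log (x - z i)) := by gcongr
    _ = Real.exp (⨍ x in a..b, p * ∑ i, Real.log (x - z i)) := by
        simp only [interval_average_eq_div, intervalIntegral.integral_const_mul,
          intervalIntegral.integral_finsetSum fun i _ => hlog i, Finset.sum_div, mul_div_assoc]
    _ ≤ ⨍ x in a..b, Real.exp (p * ∑ i, Real.log (x - z i)) :=
        exp_intervalAverage_le hab.ne hu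
          (hprod.congr_ae (ae_restrict_of_ae hexp.symm))
    _ = ⨍ x in a..b, (∏ i, |x - z i|) ^ p := average_congr (ae_restrict_of_ae hexp)

section LpNorm

variable {p a b : ℝ}

theorem integral_abs_rpow_nonneg (hab : a ≤ b) (f : ℝ → ℝ) : 0 ≤ ∫ x in a..b, |f x| ^ p :=
  intervalIntegral.integral_nonneg hab fun _ _ => Real.rpow_nonneg (abs_nonneg _) _

theorem Lp_nonneg (hab : a ≤ b) (f : ℝ → ℝ) : 0 ≤ Lp p a b f :=
  Real.rpow_nonneg (integral_abs_rpow_nonneg hab f) _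

theorem Lp_mono (hab : a ≤ b) (hp : 0 ≤ p) {f g : ℝ → ℝ} (hf : ContinuousOn f (Icc a b))
    (hg : ContinuousOn g (Icc a b)) (hfg : ∀ x ∈ Icc a b, |f x| ≤ |g x|) :
    Lp p a b f ≤ Lp p a b g := by
  have hint : ∀ {h : ℝ → ℝ}, ContinuousOn h (Icc a b) →
      IntervalIntegrable (fun x => |h x| ^ p) volume a b := fun hh =>
    (hh.abs.rpow_const fun _ _ => .inr hp).intervalIntegrable_of_Icc hab
  refine Real.rpow_le_rpow (integral_abs_rpow_nonneg hab f)
    (intervalIntegral.integral_mono_on hab (hint hf) (hint hg) fun x hx => ?_)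
    (one_div_nonneg.2 hp)
  exact Real.rpow_le_rpow (abs_nonneg _) (hfg x hx) hp

theorem Lp_eq_average_rpow_mul (hab : a < b) (f : ℝ → ℝ) :
    Lp p a b f = (⨍ x in a..b, |f x| ^ p) ^ (1 / p) * (b - a) ^ (1 / p) := by
  have hL : 0 < b - a := sub_pos.2 hab
  rw [interval_average_eq_div,
    ← Real.mul_rpow (div_nonneg (integral_abs_rpow_nonneg hab.le f) hL.le) hL.le,
    div_mul_cancel₀ _ hL.ne', _root_.Lp]

theorem Lp_const_mul (hab : a ≤ b) (hp : 0 < p) (c : ℝ) (f : ℝ → ℝ) :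
    Lp p a b (fun x => c * f x) = |c| * Lp p a b f := by
  simp only [_root_.Lp, abs_mul, Real.mul_rpow (abs_nonneg c) (abs_nonneg _),
    intervalIntegral.integral_const_mul]
  rw [Real.mul_rpow (by positivity) (integral_abs_rpow_nonneg hab f), one_div,
    Real.rpow_rpow_inv (abs_nonneg c) hp.ne']

theorem le_Lp_prod_abs_sub (hab : a < b) (hp : 0 < p) {ι : Type*} [Fintype ι]
    (z : ι → ℝ) :
    ((b - a) / (2 * Real.exp 1)) ^ Fintype.card ι * (b - a) ^ (1 / p) ≤
      Lp p a b fun x => ∏ i, |x - z i| := by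
  have : 0 < b - a := sub_pos.2 hab
  rw [Lp_eq_average_rpow_mul hab]
  gcongr
  simp only [Finset.abs_prod, abs_abs]
  rw [one_div, Real.le_rpow_inv_iff_of_pos (by positivity) _ hp]
  · exact le_average_prod_abs_sub_rpow hab hp.le z
  · exact (le_average_prod_abs_sub_rpow hab hp.le z).trans' (by positivity)

theorem integral_abs_rpow {q r : ℝ} (hq : 0 ≤ q) (hr : 0 ≤ r) :
    ∫ x in -r..r, |x| ^ q = 2 * (r ^ (q + 1) / (q + 1)) := by
  have hint (a b : ℝ) : IntervalIntegrable (fun x => |x| ^ q) volume a b :=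
    (Continuous.rpow_const continuous_abs fun _ => .inr hq).intervalIntegrable a b
  have hright : ∫ x in (0 : ℝ)..r, |x| ^ q = r ^ (q + 1) / (q + 1) := calc
    _ = ∫ x in (0 : ℝ)..r, x ^ q := intervalIntegral.integral_congr fun x hx => by
      rw [uIcc_of_le hr] at hx
      simp only [abs_of_nonneg hx.1]
    _ = r ^ (q + 1) / (q + 1) := by
      rw [integral_rpow (.inl (by linarith)), Real.zero_rpow (by positivity), sub_zero]
  have hleft : ∫ x in -r..0, |x| ^ q = ∫ x in (0 : ℝ)..r, |x| ^ q := by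
    simpa only [abs_neg, neg_zero] using
      (intervalIntegral.integral_comp_neg (a := 0) (b := r) fun x => |x| ^ q).symm
  rw [← intervalIntegral.integral_add_adjacent_intervals (hint _ 0) (hint 0 _), hleft, hright,
    two_mul]

theorem Lp_sub_midpoint_pow (hp : 0 < p) (hab : a < b) (n : ℕ) :
    Lp p a b (fun x => (x - (a + b) / 2) ^ n) =
      ((b - a) / 2) ^ n * ((b - a) / (1 + n * p)) ^ (1 / p) := by
  have hr : 0 < (b - a) / 2 := by linarith
  have hint : ∫ x in a..b, |(x - (a + b) / 2) ^ n| ^ p =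
      (((b - a) / 2) ^ n) ^ p * ((b - a) / (1 + n * p)) := calc
    _ = ∫ x in a..b, |x - (a + b) / 2| ^ (n * p) := by
      simp only [abs_pow, Real.rpow_mul (abs_nonneg _), Real.rpow_natCast]
    _ = ∫ x in -((b - a) / 2)..((b - a) / 2), |x| ^ (n * p) := by
      rw [intervalIntegral.integral_comp_sub_right fun x => |x| ^ (n * p)]
      congr 1 <;> ring
    _ = _ := by
      rw [integral_abs_rpow (by positivity) hr.le, Real.rpow_add_one hr.ne',
        Real.rpow_mul hr.le, Real.rpow_natCast]
      ring
  rw [_root_.Lp, hint, Real.mul_rpow (by positivity) (div_nonneg (by linarith) (by positivity)),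
    one_div, Real.rpow_rpow_inv (by positivity) hp.ne']

end LpNorm

/-! ### Functions in `𝒟ⁿ` -/

theorem exists_contDiff_eqOn_Icc {a b : ℝ} (hab : a ≤ b) {N : ℕ} {fd : ℕ → ℝ → ℝ}
    (hd : ∀ k < N, ∀ x ∈ Icc a b, HasDerivWithinAt (fd k) (fd (k + 1) x) (Icc a b) x)
    (hc : ContinuousOn (fd N) (Icc a b)) :
    ∃ F : ℝ → ℝ, ContDiff ℝ N F ∧ EqOn F (fd 0) (Icc a b) ∧
      EqOn (iteratedDeriv N F) (fd N) (Icc a b) := by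
  induction N generalizing fd with
  | zero =>
    have heq : EqOn (IccExtend hab ((Icc a b).domRestrict (fd 0))) (fd 0) (Icc a b) :=
      fun x hx => by rw [IccExtend_of_mem hab _ hx, domRestrict_apply]
    exact ⟨_, contDiff_zero.2 hc.domRestrict.Icc_extend', heq, by rwa [iteratedDeriv_zero]⟩
  | succ N ih =>
    obtain ⟨G, hG, hG₀, hGN⟩ := ih (fd := fun k => fd (k + 1))
      (fun k hk => hd (k + 1) (Nat.succ_lt_succ hk)) hc
    have hderiv (x : ℝ) : HasDerivAt (fun x => fd 0 a + ∫ t in a..x, G t) (G x) x :=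
      (hG.continuous.integral_hasStrictDerivAt a x).hasDerivAt.const_add _
    have hderiv_eq : deriv (fun x => fd 0 a + ∫ t in a..x, G t) = G :=
      funext fun x => (hderiv x).deriv
    refine ⟨fun x => fd 0 a + ∫ t in a..x, G t, ?_, ?_, ?_⟩
    · rw [Nat.cast_add_one]
      refine contDiff_succ_iff_deriv.2 ⟨fun x => (hderiv x).differentiableAt, by simp, ?_⟩
      rwa [hderiv_eq]
    · intro x hx
      have hsub : Icc a x ⊆ Icc a b := Icc_subset_Icc_right hx.2
      have hftc : ∫ t in a..x, G t = fd 0 x - fd 0 a := by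
        refine intervalIntegral.integral_eq_sub_of_hasDerivAt_of_le hx.1
          (fun t ht => ((hd 0 N.succ_pos t (hsub ht)).continuousWithinAt).mono hsub)
          (fun t ht => ?_) (hG.continuous.intervalIntegrable a x)
        have htb : t ∈ Ioo a b := ⟨ht.1, ht.2.trans_le hx.2⟩
        rw [hG₀ (Ioo_subset_Icc_self htb)]
        exact (hd 0 N.succ_pos t (Ioo_subset_Icc_self htb)).hasDerivAt (Icc_mem_nhds htb.1 htb.2)
      simp only [hftc, add_sub_cancel]
    · rwa [iteratedDeriv_succ', hderiv_eq]

theorem mIoo_nonneg (n : ℕ) (a b : ℝ) (fd : ℕ → ℝ → ℝ) : 0 ≤ mIoo n a b fd :=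
  Real.sInf_nonneg (by rintro _ ⟨x, -, rfl⟩; exact abs_nonneg _)

theorem mIoo_le_abs {n : ℕ} {a b x : ℝ} {fd : ℕ → ℝ → ℝ} (hx : x ∈ Ioo a b) :
    mIoo n a b fd ≤ |fd n x| :=
  csInf_le ⟨0, by rintro _ ⟨y, -, rfl⟩; exact abs_nonneg _⟩ (mem_image_of_mem _ hx)

theorem growsAtLeast_Icc_of_le_deriv {a b c : ℝ} {h h' : ℝ → ℝ} (hh : ContinuousOn h (Icc a b))
    (hd : ∀ x ∈ Ioo a b, HasDerivAt h (h' x) x) (hc : ∀ x ∈ Ioo a b, c ≤ h' x) :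
    GrowsAtLeast c h (Icc a b) := by
  rw [← interior_Icc] at hd hc
  exact (convex_Icc a b).mul_sub_le_image_sub_of_le_deriv hh
    (fun x hx => (hd x hx).differentiableAt.differentiableWithinAt)
    fun x hx => (hd x hx).deriv.symm ▸ hc x hx

theorem growsAtLeast_or_neg_of_le_abs_deriv {a b c : ℝ} {h h' : ℝ → ℝ} (hc₀ : 0 < c)
    (hh : ContinuousOn h (Icc a b)) (hd : ∀ x ∈ Ioo a b, HasDerivAt h (h' x) x)
    (hc : ∀ x ∈ Ioo a b, c ≤ |h' x|) :
    GrowsAtLeast c h (Icc a b) ∨ GrowsAtLeast c (-h) (Icc a b) := by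
  rcases hasDerivWithinAt_forall_lt_or_forall_gt_of_forall_ne (convex_Ioo a b)
    (fun x hx => (hd x hx).hasDerivWithinAt) (m := 0)
    (fun x hx => abs_pos.1 (hc₀.trans_le (hc x hx))) with hneg | hpos
  · exact .inr <| growsAtLeast_Icc_of_le_deriv hh.neg (fun x hx => (hd x hx).neg) fun x hx =>
      abs_of_neg (hneg x hx) ▸ hc x hx
  · exact .inl <| growsAtLeast_Icc_of_le_deriv hh hd fun x hx =>
      abs_of_pos (hpos x hx) ▸ hc x hx

theorem IsDn.continuousOn {n : ℕ} {a b : ℝ} {fd : ℕ → ℝ → ℝ} (hf : IsDn n a b fd) (hn : 1 ≤ n) :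
    ContinuousOn (fd 0) (Icc a b) := by
  rcases hn.eq_or_lt with rfl | hn
  · exact hf.2.1
  · exact fun x hx => (hf.1 0 hn x hx).continuousWithinAt

theorem IsDn.exists_mIoo_mul_prod_le_abs {n : ℕ} {a b : ℝ} {fd : ℕ → ℝ → ℝ}
    (hf : IsDn n a b fd) (hn : 1 ≤ n) (hab : a ≤ b) :
    ∃ z : Fin n → ℝ, ∀ x ∈ Icc a b, mIoo n a b fd / n ! * ∏ i, |x - z i| ≤ |fd 0 x| := by
  obtain ⟨N, rfl⟩ := Nat.exists_eq_add_of_le' hn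
  rcases (mIoo_nonneg (N + 1) a b fd).eq_or_lt with hm | hm
  · exact ⟨0, fun x _ => by rw [← hm, zero_div, zero_mul]; exact abs_nonneg _⟩
  obtain ⟨F, hF, hF₀, hFN⟩ :=
    exists_contDiff_eqOn_Icc hab (fun k hk => hf.1 k (Nat.succ_lt_succ hk)) hf.2.1
  have hcancel : ((N + 1)! : ℝ) * (mIoo (N + 1) a b fd / (N + 1)!) = mIoo (N + 1) a b fd :=
    mul_div_cancel₀ _ (by positivity)
  have hroots : ∀ {G : ℝ → ℝ}, ContDiff ℝ N G → (∀ x ∈ Icc a b, |G x| = |fd 0 x|) →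
      GrowsAtLeast (mIoo (N + 1) a b fd) (iteratedDeriv N G) (Icc a b) →
      ∃ z : Fin (N + 1) → ℝ, ∀ x ∈ Icc a b,
        mIoo (N + 1) a b fd / (N + 1)! * ∏ i, |x - z i| ≤ |fd 0 x| := fun hG hGf hgrow => by
    obtain ⟨z, hz⟩ := exists_mul_prod_abs_sub_le_abs isCompact_Icc (convex_Icc a b)
      (nonempty_Icc.2 hab) hG (hcancel.symm ▸ hgrow)
    exact ⟨z, fun x hx => hGf x hx ▸ hz x hx⟩
  rcases growsAtLeast_or_neg_of_le_abs_deriv hm hf.2.1 hf.2.2 fun x hx => mIoo_le_abs hx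
    with hgrow | hgrow
  · exact hroots hF (fun x hx => by rw [hF₀ hx]) (hgrow.congr hFN.symm)
  · refine hroots hF.neg (fun x hx => by rw [abs_neg, hF₀ hx]) (hgrow.congr fun x hx => ?_)
    rw [iteratedDeriv_fun_neg, hFN hx]
    rfl

theorem IsDn.mIoo_div_factorial_mul_le_Lp {n : ℕ} {p a b : ℝ} {fd : ℕ → ℝ → ℝ}
    (hf : IsDn n a b fd) (hn : 1 ≤ n) (hp : 0 < p) (hab : a < b) :
    mIoo n a b fd / n ! * (((b - a) / (2 * Real.exp 1)) ^ n * (b - a) ^ (1 / p)) ≤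
      Lp p a b (fd 0) := by
  have hc : 0 ≤ mIoo n a b fd / n ! := div_nonneg (mIoo_nonneg n a b fd) (by positivity)
  obtain ⟨z, hz⟩ := hf.exists_mIoo_mul_prod_le_abs hn hab.le
  calc mIoo n a b fd / n ! * (((b - a) / (2 * Real.exp 1)) ^ n * (b - a) ^ (1 / p))
      ≤ mIoo n a b fd / n ! * Lp p a b (fun x => ∏ i, |x - z i|) := by
        gcongr
        simpa only [Fintype.card_fin] using le_Lp_prod_abs_sub hab hp z
    _ = Lp p a b (fun x => mIoo n a b fd / n ! * ∏ i, |x - z i|) := by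
        rw [Lp_const_mul hab.le hp, abs_of_nonneg hc]
    _ ≤ Lp p a b (fd 0) := by
        refine Lp_mono hab.le hp.le (by fun_prop) (hf.continuousOn hn) fun x hx => ?_
        rw [abs_of_nonneg (mul_nonneg hc (Finset.prod_nonneg fun i _ => abs_nonneg _))]
        exact hz x hx

theorem isDn_polynomial {n : ℕ} (hn : 1 ≤ n) (a b : ℝ) (Q : ℝ[X]) :
    IsDn n a b (fun k x => (derivative^[k] Q).eval x) := by
  have hderiv (k : ℕ) (x : ℝ) :
      HasDerivAt (fun x => (derivative^[k] Q).eval x) ((derivative^[k + 1] Q).eval x) x := by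
    rw [Function.iterate_succ_apply']
    exact (derivative^[k] Q).hasDerivAt x
  obtain ⟨N, rfl⟩ := Nat.exists_eq_add_of_le' hn
  exact ⟨fun k _ x _ => (hderiv k x).hasDerivWithinAt, by fun_prop, fun x _ => hderiv N x⟩

theorem iterate_derivative_natDegree_of_monic {R : Type*} [Semiring R] {Q : R[X]}
    (hQ : Q.Monic) : derivative^[Q.natDegree] Q = C (Q.natDegree ! : R) := by
  have hdeg : (derivative^[Q.natDegree] Q).natDegree = 0 := by
    have := natDegree_iterate_derivative Q Q.natDegree
    omega
  rw [eq_C_of_natDegree_eq_zero hdeg, coeff_iterate_derivative, zero_add, descFactorial_self,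
    hQ.coeff_natDegree, nsmul_one]

theorem mIoo_polynomial {a b : ℝ} (hab : a < b) {Q : ℝ[X]} (hQ : Q.Monic) :
    mIoo Q.natDegree a b (fun k x => (derivative^[k] Q).eval x) = Q.natDegree ! := by
  simp only [mIoo, iterate_derivative_natDegree_of_monic hQ, eval_C, abs_cast]
  rw [(nonempty_Ioo.2 hab).image_const, csInf_singleton]

theorem le_Lp_polynomial {p a b : ℝ} (hp : 0 < p) (hab : a < b) {Q : ℝ[X]} (hQ : Q.Monic)
    (hn : 1 ≤ Q.natDegree) :
    ((b - a) / (2 * Real.exp 1)) ^ Q.natDegree * (b - a) ^ (1 / p) ≤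
      Lp p a b fun x => Q.eval x := by
  have hle := (isDn_polynomial hn a b Q).mIoo_div_factorial_mul_le_Lp hn hp hab
  rwa [mIoo_polynomial hab hQ, div_self (by positivity), one_mul] at hle

/-! ### The extremal constants -/

theorem le_Dstar {n : ℕ} {p a b : ℝ} (hn : 1 ≤ n) (hp : 0 < p) (hab : a < b) :
    ((b - a) / (2 * Real.exp 1)) ^ n * (b - a) ^ (1 / p) ≤ Dstar n p a b := by
  refine le_csInf ⟨_, X ^ n, monic_X_pow n, natDegree_X_pow n, rfl⟩ ?_
  rintro _ ⟨Q, hQ, rfl, rfl⟩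
  exact le_Lp_polynomial hp hab hQ hn

theorem Dstar_le_Lp {p a b : ℝ} (hab : a ≤ b) {Q : ℝ[X]} (hQ : Q.Monic) :
    Dstar Q.natDegree p a b ≤ Lp p a b fun x => Q.eval x :=
  csInf_le ⟨0, by rintro _ ⟨R, -, -, rfl⟩; exact Lp_nonneg hab _⟩ ⟨Q, hQ, rfl, rfl⟩

theorem IsDn.mIoo_div_Lp_le {n : ℕ} {p : ℝ} {fd : ℕ → ℝ → ℝ} (hf : IsDn n 0 1 fd) (hn : 1 ≤ n)
    (hp : 0 < p) : mIoo n 0 1 fd / Lp p 0 1 (fd 0) ≤ (2 * Real.exp 1) ^ n * n ! := by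
  refine div_le_of_le_mul₀ (Lp_nonneg zero_le_one _) (by positivity) ?_
  calc mIoo n 0 1 fd
      = (2 * Real.exp 1) ^ n * n ! *
          (mIoo n 0 1 fd / n ! * (((1 - 0) / (2 * Real.exp 1)) ^ n * (1 - 0) ^ (1 / p))) := by
        rw [sub_zero, Real.one_rpow, div_pow, one_pow]
        field_simp
    _ ≤ (2 * Real.exp 1) ^ n * n ! * Lp p 0 1 (fd 0) := by
        gcongr
        exact hf.mIoo_div_factorial_mul_le_Lp hn hp one_pos

theorem Cnp_le {n : ℕ} {p : ℝ} (hn : 1 ≤ n) (hp : 0 < p) :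
    Cnp n p ≤ (2 * Real.exp 1) ^ n * n ! :=
  Real.sSup_le (by rintro _ ⟨fd, hf, -, rfl⟩; exact hf.mIoo_div_Lp_le hn hp) (by positivity)

theorem exists_eval_ne_zero_of_infinite {R : Type*} [CommRing R] [IsDomain R] {Q : R[X]}
    (hQ : Q ≠ 0) {s : Set R} (hs : s.Infinite) : ∃ x ∈ s, Q.eval x ≠ 0 := by
  by_contra! hzero
  exact hQ (eq_zero_of_infinite_isRoot Q (hs.mono hzero))

theorem factorial_div_Lp_le_Cnp {p : ℝ} (hp : 0 < p) {Q : ℝ[X]} (hQ : Q.Monic)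
    (hn : 1 ≤ Q.natDegree) :
    Q.natDegree ! / Lp p 0 1 (fun x => Q.eval x) ≤ Cnp Q.natDegree p := by
  refine le_csSup ⟨(2 * Real.exp 1) ^ Q.natDegree * Q.natDegree !, ?_⟩ ⟨_, isDn_polynomial hn 0 1 Q,
    exists_eval_ne_zero_of_infinite hQ.ne_zero (Icc_infinite one_pos), ?_⟩
  · rintro _ ⟨fd, hf, -, rfl⟩
    exact hf.mIoo_div_Lp_le hn hp
  · rw [mIoo_polynomial one_pos hQ, Function.iterate_zero_apply]

/-- For `0 < p < ∞`, `2ⁿ(1+np)^{1/p} n! ≤ C(n,p) ≤ (2e)ⁿ n!`; equivalently,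
`(2e)^{-n} ≤ D**(n,p,[0,1]) ≤ 2^{-n}(1+np)^{-1/p}`. -/
theorem stmt16 (n : ℕ) (hn : 1 ≤ n) (p : ℝ) (hp : 0 < p) :
    (2 ^ n * (1 + n * p) ^ (1 / p) * (n ! : ℝ) ≤ Cnp n p ∧
      Cnp n p ≤ (2 * Real.exp 1) ^ n * (n ! : ℝ)) ∧
    ((2 * Real.exp 1) ^ (-(n:ℤ)) ≤ Dstar n p 0 1 ∧
      Dstar n p 0 1 ≤ (2:ℝ) ^ (-(n:ℤ)) * (1 + n * p) ^ (-(1 / p))) := by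
  obtain ⟨Q, hQ, hdeg, hLp⟩ : ∃ Q : ℝ[X], Q.Monic ∧ Q.natDegree = n ∧
      Lp p 0 1 (fun x => Q.eval x) = (2 : ℝ) ^ (-(n : ℤ)) * (1 + n * p) ^ (-(1 / p)) := by
    refine ⟨(X - C ((0 + 1) / 2)) ^ n, (monic_X_sub_C _).pow n, ?_, ?_⟩
    · rw [(monic_X_sub_C _).natDegree_pow, natDegree_X_sub_C, mul_one]
    · simp only [eval_pow, eval_sub, eval_X, eval_C]
      rw [Lp_sub_midpoint_pow hp one_pos, sub_zero, one_div_pow, one_div (1 + n * p),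
        Real.inv_rpow (by positivity), Real.rpow_neg (by positivity), zpow_neg, zpow_natCast,
        one_div]
  refine ⟨⟨?_, Cnp_le hn hp⟩, ?_, ?_⟩
  · have hCnp := factorial_div_Lp_le_Cnp hp hQ (hdeg ▸ hn)
    rw [hdeg, hLp, zpow_neg, zpow_natCast, Real.rpow_neg (by positivity)] at hCnp
    convert hCnp using 1
    field_simp
  · have hDstar := le_Dstar hn hp (zero_lt_one' ℝ)
    simpa only [sub_zero, Real.one_rpow, mul_one, one_div, inv_pow, zpow_neg, zpow_natCast] using
      hDstar
  · exact hLp ▸ hdeg ▸ Dstar_le_Lp zero_le_one hQ
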